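/- arXiv:2511.22600 — 6 statements merged into one kernel-verified Lean document; each statement's English description precedes it below -/
import Mathlib

section
/- Let K be a field and let v, w be nontrivial valuations on K with values in ℝ≥0 which are not equivalent. Then there exists f ∈ K with v(f) ≤ 1 and w(f) > 1 (equivalently, f lies in the valuation subring of v but not in that of w). -/
/-!
A valuation ring of rank one is a maximal proper subring of `K`. If no `f` separates `v` from `w`,
then the valuation subring of `v` is contained in that of `w`, which is proper because `w` is
nontrivial. If some `x` had `w x ≤ 1 < v x`, every `y` would be of the form `a * x ^ n` with
`v a ≤ 1`, as `ℝ≥0` is Archimedean, so `w` would be bounded by `1` on all of `K`. Hence the two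
valuation subrings coincide and `v`, `w` are equivalent.
-/

open scoped NNReal

/-- Let `K` be a field and `v`, `w` nontrivial valuations on `K` with values in `ℝ≥0`
which are not equivalent.  Then there exists `f ∈ K` with `v f ≤ 1` and `w f > 1`,
i.e. `f` lies in the valuation subring of `v` but not in that of `w`. -/
theorem exists_separating_element_of_not_isEquiv
    {K : Type*} [Field K] (v w : Valuation K ℝ≥0)
    (hv : ∃ x : K, x ≠ 0 ∧ v x ≠ 1)
    (hw : ∃ x : K, x ≠ 0 ∧ w x ≠ 1)
    (h : ¬ v.IsEquiv w) :
    ∃ f : K, v f ≤ 1 ∧ 1 < w f := by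
  by_contra! hle
  refine h (Valuation.isEquiv_of_val_le_one fun x => ⟨hle x, fun hwx => ?_⟩)
  by_contra! hvx
  -- Nontriviality of `w` gives an element outside its valuation subring.
  obtain ⟨y, hy⟩ : ∃ y : K, 1 < w y := by
    obtain ⟨z, hz, hz1⟩ := hw
    rcases lt_or_gt_of_ne hz1 with hlt | hgt
    · exact ⟨z⁻¹, by
        rw [map_inv₀]
        exact (one_lt_inv₀ (pos_iff_ne_zero.mpr ((w.ne_zero_iff).mpr hz))).mpr hlt⟩
    · exact ⟨z, hgt⟩
  have hx : x ≠ 0 := by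
    rintro rfl
    simp at hvx
  -- The Archimedean property: some power of `x` dominates `y` for `v`, so `y / x ^ n` lies in
  -- the valuation subring of `v`, hence in that of `w`, which forces `w y ≤ w x ^ n ≤ 1`.
  obtain ⟨n, hn⟩ := pow_unbounded_of_one_lt (v y) hvx
  have hq : v (y / x ^ n) ≤ 1 := by
    rw [map_div₀, map_pow]
    exact div_le_one_of_le₀ hn.le zero_le
  have hmul : w y = w (y / x ^ n) * w x ^ n := by
    rw [← map_pow, ← map_mul, div_mul_cancel₀ _ (pow_ne_zero n hx)]
  have hy1 : w y ≤ 1 := hmul ▸ mul_le_one' (hle _ hq) (pow_le_one' hwx n)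
  exact absurd hy hy1.not_gt
end

section
/- Let M be a commutative monoid and let v, w : M → [0,∞] be functions satisfying v(xy) = v(x) + v(y) and w(xy) = w(x) + w(y) for all x, y ∈ M, and such that w(x) = ∞ whenever v(x) = ∞. Then lim_{m→∞} (1/m)·⨅{ w(x) : x ∈ M, v(x) ≥ m } = ⨅{ w(x)/v(x) : x ∈ M, 0 < v(x) < ∞ }, where both sides are taken in [0,∞], the infimum of the empty set is ∞, and division is in the extended nonnegative reals. -/
open scoped ENNReal
open Filter

/-!
Write `L` for the infimum of the ratios. If `v x ≥ m > 0`, then either `v x = ∞`, so `w x = ∞`,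
or `w x / m ≥ w x / v x ≥ L`; hence `L` is a lower bound. Conversely, for `x` with
`0 < v x < ∞` and `w x < ∞`, the power `x ^ (n + 1)` with `n = ⌊m / v x⌋` satisfies
`v (x ^ (n + 1)) ≥ m` and `w (x ^ (n + 1)) / m ≤ w x / v x + w x / m`, which tends to `w x / v x`
(`iInf_div_le_ratio_add`).
-/

/-- Only positive exponents are allowed: additivity permits `v 1 = ∞`. -/
lemma map_pow_succ_of_additive {M : Type*} [CommMonoid M] (v : M → ℝ≥0∞)
    (hv : ∀ x y : M, v (x * y) = v x + v y) (x : M) (n : ℕ) :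
    v (x ^ (n + 1)) = (n + 1) * v x := by
  induction n with
  | zero => simp
  | succ n ih => rw [pow_succ, hv, ih]; push_cast; ring

lemma iInf_div_le_ratio_add {M : Type*} [CommMonoid M] (v w : M → ℝ≥0∞)
    (hv : ∀ x y : M, v (x * y) = v x + v y)
    (hw : ∀ x y : M, w (x * y) = w x + w y)
    (x : M) (h0 : v x ≠ 0) (ht : v x ≠ ⊤) (m : ℝ) (hm : 0 < m) :
    (⨅ x ∈ {x : M | ENNReal.ofReal m ≤ v x}, w x) / ENNReal.ofReal m
      ≤ w x / v x + w x / ENNReal.ofReal m := by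
  have hV : 0 < (v x).toReal := ENNReal.toReal_pos h0 ht
  have hvx : v x = ENNReal.ofReal (v x).toReal := (ENNReal.ofReal_toReal ht).symm
  have hM0 : ENNReal.ofReal m ≠ 0 := by simpa using hm
  set n : ℕ := ⌊m / (v x).toReal⌋₊ with hn
  have hmem : ENNReal.ofReal m ≤ v (x ^ (n + 1)) := by
    have h1 : m ≤ ((n : ℝ) + 1) * (v x).toReal :=
      ((div_lt_iff₀ hV).1 (Nat.lt_floor_add_one (m / (v x).toReal))).le
    rw [map_pow_succ_of_additive v hv]
    calc ENNReal.ofReal m ≤ ENNReal.ofReal (((n : ℝ) + 1) * (v x).toReal) :=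
          ENNReal.ofReal_le_ofReal h1
      _ = (n + 1) * v x := by
          rw [ENNReal.ofReal_mul (by positivity), ENNReal.ofReal_add (by positivity) (by simp),
            ← hvx]
          simp
  have hle : (n : ℝ≥0∞) ≤ ENNReal.ofReal m / v x := by
    have h1 : (n : ℝ) ≤ m / (v x).toReal := Nat.floor_le (by positivity)
    have h2 := ENNReal.ofReal_le_ofReal h1
    rwa [ENNReal.ofReal_div_of_pos hV, ← hvx, ENNReal.ofReal_natCast] at h2
  calc (⨅ x ∈ {x : M | ENNReal.ofReal m ≤ v x}, w x) / ENNReal.ofReal m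
      ≤ w (x ^ (n + 1)) / ENNReal.ofReal m :=
        ENNReal.div_le_div_right (iInf₂_le (x ^ (n + 1)) hmem) _
    _ = n * w x / ENNReal.ofReal m + w x / ENNReal.ofReal m := by
        rw [map_pow_succ_of_additive w hw, add_mul, one_mul, ENNReal.add_div]
    _ ≤ (ENNReal.ofReal m / v x) * w x / ENNReal.ofReal m + w x / ENNReal.ofReal m := by
        gcongr
    _ = w x / v x + w x / ENNReal.ofReal m := by
        congr 1
        simp only [div_eq_mul_inv]
        calc ENNReal.ofReal m * (v x)⁻¹ * w x * (ENNReal.ofReal m)⁻¹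
            = (ENNReal.ofReal m * (ENNReal.ofReal m)⁻¹) * (w x * (v x)⁻¹) := by ring
          _ = w x * (v x)⁻¹ := by
            rw [ENNReal.mul_inv_cancel hM0 ENNReal.ofReal_ne_top, one_mul]

/-- Let `M` be a commutative monoid and `v w : M → [0,∞]` additive-to-multiplication
functions (`v (x*y) = v x + v y` and likewise for `w`) such that `w x = ∞` whenever
`v x = ∞`.  Then `lim_{m→∞} (1/m) ⨅ {w x : v x ≥ m}` equals
`⨅ {w x / v x : 0 < v x < ∞}`, computed in `[0,∞]` (with `⨅ ∅ = ∞`). -/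
theorem tendsto_asymptotic_order_ratio
    {M : Type*} [CommMonoid M] (v w : M → ℝ≥0∞)
    (hv : ∀ x y : M, v (x * y) = v x + v y)
    (hw : ∀ x y : M, w (x * y) = w x + w y)
    (hvw : ∀ x : M, v x = ⊤ → w x = ⊤) :
    Tendsto (fun m : ℝ => (⨅ x ∈ {x : M | ENNReal.ofReal m ≤ v x}, w x) / ENNReal.ofReal m)
      atTop
      (nhds (⨅ x ∈ {x : M | 0 < v x ∧ v x < ⊤}, w x / v x)) := by
  refine tendsto_order.2 ⟨fun a ha => ?_, fun b hb => ?_⟩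
  · filter_upwards [eventually_gt_atTop (0 : ℝ)] with m hm
    refine ha.trans_le ?_
    have hM0 : ENNReal.ofReal m ≠ 0 := by simpa using hm
    rw [ENNReal.le_div_iff_mul_le (Or.inl hM0) (Or.inl ENNReal.ofReal_ne_top)]
    refine le_iInf₂ fun x hx => ?_
    by_cases ht : v x = ⊤
    · rw [hvw x ht]; exact le_top
    have hx' : ENNReal.ofReal m ≤ v x := hx
    have h0 : 0 < v x := (pos_iff_ne_zero.2 hM0).trans_le hx'
    calc (⨅ x ∈ {x : M | 0 < v x ∧ v x < ⊤}, w x / v x) * ENNReal.ofReal m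
        ≤ w x / v x * v x :=
          mul_le_mul' (iInf₂_le x ⟨h0, lt_top_iff_ne_top.2 ht⟩) hx'
      _ = w x := ENNReal.div_mul_cancel h0.ne' ht
  · obtain ⟨x, hx, hxb⟩ : ∃ x, ∃ _ : x ∈ {x : M | 0 < v x ∧ v x < ⊤}, w x / v x < b := by
      simpa only [iInf_lt_iff] using hb
    have hwt : w x ≠ ⊤ := by
      intro h
      rw [h, ENNReal.top_div_of_ne_top hx.2.ne] at hxb
      exact not_top_lt hxb
    have hlim : Tendsto (fun m : ℝ => w x / v x + w x / ENNReal.ofReal m) atTop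
        (nhds (w x / v x)) := by
      have h1 : Tendsto (fun m : ℝ => w x / ENNReal.ofReal m) atTop (nhds (w x / ⊤)) :=
        ENNReal.Tendsto.const_div ENNReal.tendsto_ofReal_atTop (Or.inr hwt)
      have h2 := h1.const_add (w x / v x)
      simpa using h2
    filter_upwards [eventually_gt_atTop (0 : ℝ), hlim.eventually_lt_const hxb] with m hm hmb
    exact (iInf_div_le_ratio_add v w hv hw x hx.1.ne' hx.2.ne m hm).trans_lt hmb
end

section
/- Let R be any type and w : R → [0,∞] any function. Equip the space V of all functions v : R → [0,∞] with the product topology (the topology of pointwise convergence). Then the function Ψ : V → [0,∞] defined by Ψ(v) = ⨅{ w(f)/v(f) : f ∈ R, 0 < v(f) < ∞ } (division in [0,∞], with ⨅ of the empty set equal to ∞) is upper semicontinuous. -/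
open scoped ENNReal

/-- Let `R` be any type and `w : R → [0,∞]` any function.  On the space of all
functions `v : R → [0,∞]` with the product (pointwise convergence) topology, the
function `Ψ v = ⨅ {w f / v f : f ∈ R, 0 < v f < ∞}` (with `⨅ ∅ = ∞`) is upper
semicontinuous. -/
theorem upperSemicontinuous_iInf_ratio
    (R : Type*) (w : R → ℝ≥0∞) :
    UpperSemicontinuous
      (fun v : R → ℝ≥0∞ => ⨅ f ∈ {f : R | 0 < v f ∧ v f < ⊤}, w f / v f) := by
  intro v y hy
  -- If `Ψ v < y`, a single `f` witnesses it; the same `f` still does for all nearby `v'`,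
  -- since `0 < v f < ∞` is an open condition on which `v ↦ w f / v f` is continuous.
  simp only [iInf_lt_iff] at hy ⊢
  obtain ⟨f, ⟨h0, htop⟩, hlt⟩ := hy
  have hv : Filter.Tendsto (fun v' : R → ℝ≥0∞ => v' f) (nhds v) (nhds (v f)) :=
    (continuous_apply f).tendsto v
  filter_upwards [hv.eventually_const_lt h0, hv.eventually_lt_const htop,
    (ENNReal.Tendsto.const_div hv (Or.inl htop.ne)).eventually_lt_const hlt] with v' h1 h2 h3
  exact ⟨f, ⟨h1, h2⟩, h3⟩
end

section
/- Let c be a natural number and u, w : Fin c → ℝ nonnegative weight vectors with w not identically zero. For m > 0 set G(m) = inf{ Σ_i u(i)·α(i) : α : Fin c → ℕ, Σ_i w(i)·α(i) ≥ m }. Then lim_{m→∞} G(m)/m exists and equals min{ u(i)/w(i) : i ∈ Fin c, w(i) > 0 }. -/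
/-! Let `L = u k / w k` be the minimal ratio. Then `L * w i ≤ u i` for every `i` (trivially when
`w i = 0`), so `⟨w, α⟩ ≥ m` forces `⟨u, α⟩ ≥ L * m`. Conversely `⌈m / w k⌉` times the `k`-th basis
vector is admissible with `u`-weight at most `L * m + u k`. Hence `L ≤ G m / m ≤ L + u k / m` for
`m > 0`, and the limit follows by squeezing. -/

open Filter

/-- Let `u`, `w : Fin c → ℝ` be nonnegative weight vectors with `w` not identically
zero, and for `m > 0` let `G m` be the infimum of the `u`-weight `∑ i, u i * α i` over
all lattice points `α : Fin c → ℕ` with `∑ i, w i * α i ≥ m`.  Then `G m / m` converges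
as `m → ∞` to `min { u i / w i : w i > 0 }`. -/
theorem tendsto_toric_asymptotic_order
    {c : ℕ} (u w : Fin c → ℝ) (hu : ∀ i, 0 ≤ u i) (hw : ∀ i, 0 ≤ w i) (hw0 : w ≠ 0) :
    Tendsto
      (fun m : ℝ =>
        sInf {x : ℝ | ∃ α : Fin c → ℕ,
          m ≤ ∑ i, w i * (α i : ℝ) ∧ x = ∑ i, u i * (α i : ℝ)} / m)
      atTop
      (nhds (sInf {x : ℝ | ∃ i : Fin c, 0 < w i ∧ x = u i / w i})) := by
  obtain ⟨j, hj⟩ : ∃ j, 0 < w j := by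
    by_contra! h
    exact hw0 (funext fun i => le_antisymm (h i) (hw i))
  obtain ⟨k, hk, hmin⟩ := Finset.exists_min_image (Finset.univ.filter fun i => 0 < w i)
    (fun i => u i / w i) ⟨j, by simpa using hj⟩
  simp only [Finset.mem_filter, Finset.mem_univ, true_and] at hk hmin
  have hL : sInf {x : ℝ | ∃ i : Fin c, 0 < w i ∧ x = u i / w i} = u k / w k := by
    refine IsLeast.csInf_eq ⟨⟨k, hk, rfl⟩, ?_⟩
    rintro x ⟨i, hi, rfl⟩
    exact hmin i hi
  rw [hL]
  have hL0 : 0 ≤ u k / w k := div_nonneg (hu k) hk.le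
  -- The coordinates with `w i = 0` contribute nothing on the left.
  have hterm : ∀ i, u k / w k * w i ≤ u i := by
    intro i
    rcases (hw i).eq_or_lt with h | h
    · simpa [← h] using hu i
    · exact (le_div_iff₀ h).1 (hmin i h)
  have hlower : ∀ m : ℝ, ∀ α : Fin c → ℕ, m ≤ ∑ i, w i * (α i : ℝ) →
      u k / w k * m ≤ ∑ i, u i * (α i : ℝ) := by
    intro m α hα
    calc u k / w k * m ≤ u k / w k * ∑ i, w i * (α i : ℝ) :=
          mul_le_mul_of_nonneg_left hα hL0
      _ = ∑ i, u k / w k * w i * (α i : ℝ) := by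
          simp only [Finset.mul_sum, mul_assoc]
      _ ≤ ∑ i, u i * (α i : ℝ) :=
          Finset.sum_le_sum fun i _ =>
            mul_le_mul_of_nonneg_right (hterm i) (Nat.cast_nonneg _)
  -- The witness for the upper bound is `⌈m / w k⌉` times the `k`-th basis vector.
  have hwit : ∀ m : ℝ, ∃ α : Fin c → ℕ, m ≤ ∑ i, w i * (α i : ℝ) ∧
      ∑ i, u i * (α i : ℝ) = u k * (⌈m / w k⌉₊ : ℝ) := by
    intro m
    refine ⟨Pi.single k ⌈m / w k⌉₊, ?_, ?_⟩
    · have h : ∑ i, w i * ((Pi.single k ⌈m / w k⌉₊ : Fin c → ℕ) i : ℝ)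
          = w k * (⌈m / w k⌉₊ : ℝ) := by
        simp [Pi.single_apply]
      rw [h]
      exact (div_le_iff₀' hk).1 (Nat.le_ceil _)
    · simp [Pi.single_apply]
  have hlim : Tendsto (fun m : ℝ => u k / w k + u k / m) atTop (nhds (u k / w k)) := by
    have h : Tendsto (fun m : ℝ => u k / m) atTop (nhds 0) :=
      tendsto_const_nhds.div_atTop tendsto_id
    simpa using h.const_add (u k / w k)
  refine tendsto_of_tendsto_of_tendsto_of_le_of_le' tendsto_const_nhds hlim ?_ ?_
  · filter_upwards [eventually_gt_atTop 0] with m hm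
    rw [le_div_iff₀ hm]
    obtain ⟨α, hα, -⟩ := hwit m
    refine le_csInf ⟨_, α, hα, rfl⟩ ?_
    rintro x ⟨β, hβ, rfl⟩
    exact hlower m β hβ
  · filter_upwards [eventually_gt_atTop 0] with m hm
    obtain ⟨α, hα, hval⟩ := hwit m
    have hceil : (⌈m / w k⌉₊ : ℝ) ≤ m / w k + 1 :=
      (Nat.ceil_lt_add_one (div_nonneg hm.le hk.le)).le
    rw [div_le_iff₀ hm]
    calc _ ≤ ∑ i, u i * (α i : ℝ) := by
          refine csInf_le ⟨u k / w k * m, ?_⟩ ⟨α, hα, rfl⟩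
          rintro x ⟨β, hβ, rfl⟩
          exact hlower m β hβ
      _ = u k * (⌈m / w k⌉₊ : ℝ) := hval
      _ ≤ u k * (m / w k + 1) := mul_le_mul_of_nonneg_left hceil (hu k)
      _ = (u k / w k + u k / m) * m := by
          field_simp
end

section
/- Let c be a natural number and u : Fin c → ℝ a fixed nonnegative weight vector. The function assigning to each w : Fin c → ℝ with all coordinates positive the limit lim_{m→∞} G_{u,w}(m)/m, where G_{u,w}(m) = inf{ Σ_i u(i)·α(i) : α : Fin c → ℕ, Σ_i w(i)·α(i) ≥ m }, is continuous on the set { w : ∀ i, w(i) > 0 } (and is given there by w ↦ min_i u(i)/w(i)). -/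
/-!
Let `r = min_i u i / w i`, attained at `j`. Since `r * w i ≤ u i` for all `i`, every admissible `α`
has `u`-weight at least `r * m`. Conversely `⌈m / w j⌉₊` times the `j`-th basis vector is admissible
and has `u`-weight at most `r * m + u j`. Hence `toricG u w m / m` lies in `[r, r + u j / m]` for
`m > 0` and tends to `r`. A finite minimum of continuous functions is continuous.
-/

open Filter

/-- `toricG u w m` is the infimum of the `u`-weight `∑ i, u i * α i` over all lattice
points `α : Fin c → ℕ` satisfying `∑ i, w i * α i ≥ m`. -/
noncomputable def toricG {c : ℕ} (u w : Fin c → ℝ) (m : ℝ) : ℝ :=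
  sInf {x : ℝ | ∃ α : Fin c → ℕ, m ≤ ∑ i, w i * (α i : ℝ) ∧ x = ∑ i, u i * (α i : ℝ)}

lemma mul_le_toricG {c : ℕ} {u w : Fin c → ℝ} {r m : ℝ} (hr : 0 ≤ r)
    (hrw : ∀ i, r * w i ≤ u i)
    (hne : ∃ α : Fin c → ℕ, m ≤ ∑ i, w i * (α i : ℝ)) : r * m ≤ toricG u w m := by
  obtain ⟨β, hβ⟩ := hne
  refine le_csInf ⟨_, β, hβ, rfl⟩ ?_
  rintro x ⟨α, hα, rfl⟩
  calc r * m ≤ r * ∑ i, w i * (α i : ℝ) := mul_le_mul_of_nonneg_left hα hr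
    _ = ∑ i, r * w i * (α i : ℝ) := by simp only [Finset.mul_sum, mul_assoc]
    _ ≤ ∑ i, u i * (α i : ℝ) :=
      Finset.sum_le_sum fun i _ => mul_le_mul_of_nonneg_right (hrw i) (Nat.cast_nonneg _)

lemma toricG_le {c : ℕ} {u w : Fin c → ℝ} {m : ℝ} (hu : ∀ i, 0 ≤ u i)
    {α : Fin c → ℕ} (hα : m ≤ ∑ i, w i * (α i : ℝ)) :
    toricG u w m ≤ ∑ i, u i * (α i : ℝ) := by
  refine csInf_le ⟨0, ?_⟩ ⟨α, hα, rfl⟩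
  rintro x ⟨β, -, rfl⟩
  exact Finset.sum_nonneg fun i _ => mul_nonneg (hu i) (Nat.cast_nonneg _)

lemma sum_mul_single {c : ℕ} (v : Fin c → ℝ) (j : Fin c) (n : ℕ) :
    ∑ i, v i * ((Pi.single j n : Fin c → ℕ) i : ℝ) = v j * n := by
  rw [Finset.sum_eq_single j]
  · simp
  · intro i _ hij
    simp [Pi.single_eq_of_ne hij]
  · simp

/-- Let `u : Fin c → ℝ` be a fixed nonnegative weight vector.  The function assigning
to each strictly positive `w` the limit `lim_{m→∞} toricG u w m / m` is given there by
`w ↦ min_i (u i / w i)` and is continuous on the open positive orthant. -/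
theorem toric_asymptotic_order_continuousOn
    {c : ℕ} (u : Fin c → ℝ) (hu : ∀ i, 0 ≤ u i) :
    (∀ w : Fin c → ℝ, (∀ i, 0 < w i) →
      Tendsto (fun m : ℝ => toricG u w m / m) atTop (nhds (⨅ i : Fin c, u i / w i))) ∧
    ContinuousOn (fun w : Fin c → ℝ => ⨅ i : Fin c, u i / w i)
      {w : Fin c → ℝ | ∀ i, 0 < w i} := by
  rcases isEmpty_or_nonempty (Fin c) with hc | hc
  · -- With no coordinates, no point is admissible for `m > 0`, and both infima
    -- are those of the empty set, namely `0`.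
    simp only [Real.iInf_of_isEmpty]
    refine ⟨fun w _ => ?_, continuousOn_const⟩
    refine tendsto_const_nhds.congr' ?_
    filter_upwards [eventually_gt_atTop 0] with m hm
    simp [toricG, not_le.mpr hm]
  refine ⟨fun w hw => ?_, ?_⟩
  · obtain ⟨j, hj⟩ := exists_eq_ciInf_of_finite (f := fun i => u i / w i)
    rw [← hj]
    have hmin : ∀ i, u j / w j * w i ≤ u i := fun i => by
      rw [← le_div_iff₀ (hw i), hj]
      exact ciInf_le (Set.finite_range _).bddBelow i
    have hupper : Tendsto (fun m : ℝ => u j / w j + u j / m) atTop (nhds (u j / w j)) := by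
      simpa using (tendsto_const_nhds (x := u j / w j)).add (tendsto_id.const_div_atTop (u j))
    have hadm : ∀ m : ℝ,
        m ≤ ∑ i, w i * ((Pi.single j ⌈m / w j⌉₊ : Fin c → ℕ) i : ℝ) := fun m => by
      rw [sum_mul_single, ← div_le_iff₀' (hw j)]
      exact Nat.le_ceil _
    refine tendsto_of_tendsto_of_tendsto_of_le_of_le' tendsto_const_nhds hupper ?_ ?_
    · filter_upwards [eventually_gt_atTop 0] with m hm
      rw [le_div_iff₀ hm]
      exact mul_le_toricG (div_nonneg (hu j) (hw j).le) hmin ⟨_, hadm m⟩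
    · filter_upwards [eventually_gt_atTop 0] with m hm
      rw [div_le_iff₀ hm]
      calc toricG u w m ≤ u j * ⌈m / w j⌉₊ := (toricG_le hu (hadm m)).trans_eq (sum_mul_single ..)
        _ ≤ u j * (m / w j + 1) :=
          mul_le_mul_of_nonneg_left (Nat.ceil_lt_add_one (div_pos hm (hw j)).le).le (hu j)
        _ = (u j / w j + u j / m) * m := by
          have := (hw j).ne'
          field_simp
  · simp only [← Finset.inf'_univ_eq_ciInf]
    refine ContinuousOn.finset_inf'_apply _ fun i _ => ?_
    exact continuousOn_const.div (continuous_apply i).continuousOn fun w hw => (hw i).ne'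
end

section
/- Let c be a natural number and w : Fin c → ℝ a nonnegative weight vector such that the set I = { i : w(i) = 0 } is nonempty and its complement is nonempty. Let u : Fin c → ℝ be the indicator vector of the complement of I, i.e., u(i) = 1 if w(i) > 0 and u(i) = 0 if w(i) = 0. Setting L(x) = lim_{m→∞} (1/m)·inf{ Σ_i u(i)·α(i) : α : Fin c → ℕ, Σ_i x(i)·α(i) ≥ m } for nonnegative x ≠ 0, one has L(w) = min{ 1/w(i) : w(i) > 0 } > 0, while L(x) = 0 for every x with all coordinates positive; consequently L is not continuous at w (w is a limit of strictly positive vectors). -/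
/-!
Let `M = max w i`. Since `w i ≤ M * u i` for every `i`, the constraint `m ≤ ∑ w i * α i` forces
`m / M ≤ ∑ u i * α i`, while a multiple `⌈m / M⌉` of a basis vector realizing the maximum has
`u`-weight at most `m / M + 1`; squeezing gives `L w = 1 / M`, the minimum of the `1 / w i`.
If `x` is strictly positive, a large multiple of a basis vector in a direction `i` with `w i = 0`
meets the constraint at `u`-weight `0`, so `L x = 0`. As `w + t → w` when `t → 0⁺` with `w + t`
strictly positive, `L` cannot be continuous at `w`.
-/

open Filter

/-- `toricL u x` is the asymptotic `u`-weighted order `lim_{m→∞} toricG u x m / m`. -/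
noncomputable def toricL {c : ℕ} (u x : Fin c → ℝ) : ℝ :=
  limUnder atTop (fun m : ℝ => toricG u x m / m)

/-- Multiples of the `j`-th basis vector are admissible competitors for `toricG`. -/
theorem toricG_le_single {c : ℕ} (u x : Fin c → ℝ) (hu : ∀ i, 0 ≤ u i) (j : Fin c) (m : ℝ)
    (hx : 0 < x j) : toricG u x m ≤ u j * (⌈m / x j⌉₊ : ℝ) := by
  refine csInf_le ⟨0, ?_⟩ ⟨Pi.single j ⌈m / x j⌉₊, ?_, ?_⟩
  · rintro y ⟨α, -, rfl⟩
    exact Finset.sum_nonneg fun i _ => mul_nonneg (hu i) (Nat.cast_nonneg _)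
  · rw [Finset.sum_eq_single j (fun i _ hij => by simp [Pi.single_eq_of_ne hij]) (by simp),
      Pi.single_eq_same]
    have := Nat.le_ceil (m / x j)
    rwa [div_le_iff₀' hx] at this
  · rw [Finset.sum_eq_single j (fun i _ hij => by simp [Pi.single_eq_of_ne hij]) (by simp),
      Pi.single_eq_same]

/-- A lower bound on all competitors bounds `toricG`: the positive coordinate `j` only serves to
make the set of competitors nonempty, so that its infimum is not the junk value. -/
theorem le_toricG {c : ℕ} (u x : Fin c → ℝ) (j : Fin c) (m b : ℝ) (hx : 0 < x j)
    (h : ∀ α : Fin c → ℕ, m ≤ ∑ i, x i * (α i : ℝ) → b ≤ ∑ i, u i * (α i : ℝ)) :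
    b ≤ toricG u x m := by
  refine le_csInf ⟨_, Pi.single j ⌈m / x j⌉₊, ?_, rfl⟩ ?_
  · rw [Finset.sum_eq_single j (fun i _ hij => by simp [Pi.single_eq_of_ne hij]) (by simp),
      Pi.single_eq_same]
    have := Nat.le_ceil (m / x j)
    rwa [div_le_iff₀' hx] at this
  · rintro y ⟨α, hα, rfl⟩
    exact h α hα

theorem toricL_eq_zero {c : ℕ} (u x : Fin c → ℝ) (hu : ∀ i, 0 ≤ u i) (j : Fin c)
    (hj : u j = 0) (hx : 0 < x j) : toricL u x = 0 := by
  have h0 : ∀ m, toricG u x m = 0 := fun m => le_antisymm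
    (by simpa [hj] using toricG_le_single u x hu j m hx)
    (le_toricG u x j m 0 hx fun α _ =>
      Finset.sum_nonneg fun i _ => mul_nonneg (hu i) (Nat.cast_nonneg _))
  refine Tendsto.limUnder_eq ?_
  simp [h0]

theorem toricL_eq_inv_max {c : ℕ} (u x : Fin c → ℝ) (hu : ∀ i, 0 ≤ u i) (j : Fin c)
    (hj : u j = 1) (hx : 0 < x j) (hmax : ∀ i, x i ≤ x j * u i) : toricL u x = 1 / x j := by
  refine Tendsto.limUnder_eq ?_
  have hlim : Tendsto (fun m : ℝ => 1 / x j + m⁻¹) atTop (nhds (1 / x j)) := by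
    simpa using tendsto_const_nhds.add (tendsto_inv_atTop_zero (𝕜 := ℝ))
  refine tendsto_of_tendsto_of_tendsto_of_le_of_le' tendsto_const_nhds hlim ?_ ?_
  · filter_upwards [eventually_gt_atTop 0] with m hm
    rw [le_div_iff₀ hm]
    refine le_toricG u x j m _ hx fun α hα => ?_
    have : ∑ i, x i * (α i : ℝ) ≤ x j * ∑ i, u i * (α i : ℝ) := by
      rw [Finset.mul_sum]
      refine Finset.sum_le_sum fun i _ => ?_
      rw [← mul_assoc]
      exact mul_le_mul_of_nonneg_right (hmax i) (Nat.cast_nonneg _)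
    rw [one_div_mul_eq_div, div_le_iff₀' hx]
    exact hα.trans this
  · filter_upwards [eventually_gt_atTop 0] with m hm
    rw [div_le_iff₀ hm]
    have h1 := toricG_le_single u x hu j m hx
    have h2 := (Nat.ceil_lt_add_one (div_pos hm hx).le).le
    rw [hj, one_mul] at h1
    have h3 : (1 / x j + m⁻¹) * m = m / x j + 1 := by field_simp
    rw [h3]
    exact h1.trans h2

/-- Let `w : Fin c → ℝ` be a nonnegative weight vector such that the set
`I = {i : w i = 0}` and its complement are both nonempty, and let `u` be the indicator
vector of the complement of `I`.  Then `L w = min {1 / w i : w i > 0} > 0`, while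
`L x = 0` for every strictly positive `x`; consequently `L` is not continuous at `w`
(which is a limit of strictly positive vectors). -/
theorem toric_asymptotic_order_discontinuous_at_boundary
    {c : ℕ} (w : Fin c → ℝ) (hw : ∀ i, 0 ≤ w i)
    (hI : ∃ i, w i = 0) (hIc : ∃ i, w i ≠ 0)
    (u : Fin c → ℝ) (hu : ∀ i, u i = if 0 < w i then 1 else 0) :
    toricL u w = sInf {t : ℝ | ∃ i : Fin c, 0 < w i ∧ t = 1 / w i} ∧
    0 < toricL u w ∧
    (∀ x : Fin c → ℝ, (∀ i, 0 < x i) → toricL u x = 0) ∧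
    ¬ ContinuousAt (toricL u) w := by
  have hu0 : ∀ i, 0 ≤ u i := fun i => by rw [hu]; split_ifs <;> norm_num
  obtain ⟨k, hk⟩ := hIc
  obtain ⟨i₀, hi₀⟩ := hI
  have : Nonempty (Fin c) := ⟨k⟩
  obtain ⟨j, hj⟩ := Finite.exists_max w
  have hwj : 0 < w j := ((hw k).lt_of_ne' hk).trans_le (hj k)
  have hLw : toricL u w = 1 / w j := by
    refine toricL_eq_inv_max u w hu0 j (by rw [hu, if_pos hwj]) hwj fun i => ?_
    rw [hu]
    split_ifs with h
    · simpa using hj i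
    · simpa using h
  have hpos : 0 < toricL u w := by rw [hLw]; positivity
  have hzero : ∀ x : Fin c → ℝ, (∀ i, 0 < x i) → toricL u x = 0 := fun x hx =>
    toricL_eq_zero u x hu0 i₀ (by simp [hu, hi₀]) (hx i₀)
  refine ⟨?_, hpos, hzero, fun hc => ?_⟩
  · rw [hLw]
    symm
    apply IsLeast.csInf_eq
    refine ⟨⟨j, hwj, rfl⟩, ?_⟩
    rintro t ⟨i, hi, rfl⟩
    exact one_div_le_one_div_of_le hi (hj i)
  · have ht : Tendsto (fun t : ℝ => fun i => w i + t) (nhdsWithin 0 (Set.Ioi 0)) (nhds w) := by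
      have : Continuous (fun t : ℝ => fun i => w i + t) := by fun_prop
      have h := this.tendsto 0
      simp only [add_zero] at h
      exact h.mono_left nhdsWithin_le_nhds
    have h1 := hc.tendsto.comp ht
    have h2 : Tendsto (toricL u ∘ fun t : ℝ => fun i => w i + t)
        (nhdsWithin 0 (Set.Ioi 0)) (nhds 0) := by
      refine tendsto_const_nhds.congr' ?_
      filter_upwards [self_mem_nhdsWithin] with t ht
      exact (hzero _ fun i => add_pos_of_nonneg_of_pos (hw i) ht).symm
    exact hpos.ne' (tendsto_nhds_unique h1 h2)
end
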